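/- If T is a subcubic tree, then γ_e(T) = γ*_{e,f}(T) if and only if T is the star K_{1,3}. -/

import Mathlib

open SimpleGraph Finset

variable {V : Type*}

/-- `(1/2)^(d-1)` for an extended natural `d`, with value `0` at `∞`. -/
noncomputable def halfPow (d : ℕ∞) : ℝ :=
  if d = ⊤ then 0 else 2 * (1 / 2 : ℝ) ^ d.toNat

/-- `(1/2)^(dist_G(u,v)-1)` using the ordinary graph distance. -/
noncomputable def expw (G : SimpleGraph V) (u v : V) : ℝ :=
  2 * (1 / 2 : ℝ) ^ G.dist u v

/-- The modified distance `dist_{(G,D)}(u,v)`: minimum length of a path from `u` to `v`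
whose only vertex in `D` is the endvertex `v` (`∞` if no such path exists). -/
noncomputable def mdist (G : SimpleGraph V) (D : Finset V) (u v : V) : ℕ∞ :=
  sInf ((fun p : G.Walk u v => (p.length : ℕ∞)) ''
    {p | p.IsPath ∧ v ∈ D ∧ ∀ w ∈ p.support, w ∈ D → w = v})

/-- `w_{(G,D)}(u)`. -/
noncomputable def wblock (G : SimpleGraph V) (D : Finset V) (u : V) : ℝ :=
  ∑ v ∈ D, halfPow (mdist G D u v)

/-- `w*_{(G,D)}(u)`. -/
noncomputable def wstar (G : SimpleGraph V) (D : Finset V) (u : V) : ℝ :=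
  ∑ v ∈ D, expw G u v

def IsExpDomSet (G : SimpleGraph V) (D : Finset V) : Prop :=
  ∀ u : V, 1 ≤ wblock G D u

def IsPorousExpDomSet (G : SimpleGraph V) (D : Finset V) : Prop :=
  ∀ u : V, 1 ≤ wstar G D u

def IsDomSet (G : SimpleGraph V) (D : Finset V) : Prop :=
  ∀ v : V, v ∉ D → ∃ u ∈ D, G.Adj u v

/-- The exponential domination number `γ_e(G)`. -/
noncomputable def gammaE (G : SimpleGraph V) [Fintype V] : ℕ :=
  sInf {k | ∃ D : Finset V, IsExpDomSet G D ∧ D.card = k}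

/-- The porous exponential domination number `γ*_e(G)`. -/
noncomputable def gammaEStar (G : SimpleGraph V) [Fintype V] : ℕ :=
  sInf {k | ∃ D : Finset V, IsPorousExpDomSet G D ∧ D.card = k}

/-- The domination number `γ(G)`. -/
noncomputable def gammaDom (G : SimpleGraph V) [Fintype V] : ℕ :=
  sInf {k | ∃ D : Finset V, IsDomSet G D ∧ D.card = k}

/-- Feasibility for the LP relaxation of porous exponential domination. -/
def FracFeasible (G : SimpleGraph V) [Fintype V] (x : V → ℝ) : Prop :=
  (∀ u, 0 ≤ x u) ∧ ∀ v : V, 1 ≤ ∑ u : V, expw G u v * x u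

/-- The fractional porous exponential domination number `γ*_{e,f}(G)`. -/
noncomputable def gammaEF (G : SimpleGraph V) [Fintype V] : ℝ :=
  sInf {s | ∃ x : V → ℝ, FracFeasible G x ∧ s = ∑ u : V, x u}

/-- A graph is subcubic if all degrees are at most `3`. -/
def Subcubic (G : SimpleGraph V) [Fintype V] [DecidableRel G.Adj] : Prop :=
  ∀ v : V, G.degree v ≤ 3

/-!
In a finite tree rooted at `v` every vertex other than `v` is a child of exactly one vertex, and a
child contributes `r` times the power `r ^ dist v u` of its parent, so that
`∑ u, r ^ dist v u * (1 + r - r * deg u) = 1 + r` for every `r`. For `r = 1 / 2` this says that the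
weights `(3 - deg u) / 6` satisfy every constraint of the linear program with equality; in a
subcubic tree they are nonnegative, and by the symmetry of the constraint matrix they solve both
the program and its dual. The case `r = 1` evaluates the optimum as `(n + 2) / 6`.

If an exponential dominating set `D` attains this value, complementary slackness gives
`wstar u = 1` at every vertex `u` of degree less than `3`. Since `wstar ≥ 2` on `D`, the vertices in
`D` have degree `3`. Two distinct vertices `a, v ∈ D` cannot exist: a leaf `u` beyond `v` as seen
from `a` would satisfy `wblock u < wstar u = 1`, because `v` blocks `a`. Hence `D` is a single
vertex of degree `3` and `n = 4`.
-/

section ModifiedDistance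

lemma halfPow_natCast (n : ℕ) : halfPow n = 2 * (1 / 2 : ℝ) ^ n := by
  simp [halfPow]

lemma halfPow_nonneg (d : ℕ∞) : 0 ≤ halfPow d := by
  unfold halfPow
  positivity

lemma halfPow_antitone : Antitone halfPow := by
  intro d e hde
  induction e with
  | top => simpa [halfPow] using halfPow_nonneg d
  | coe n =>
    lift d to ℕ using ne_top_of_le_ne_top (ENat.natCast_ne_top n) hde
    rw [halfPow_natCast, halfPow_natCast]
    gcongr ?_ * ?_
    exact pow_le_pow_of_le_one (by norm_num) (by norm_num) (by exact_mod_cast hde)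

variable (G : SimpleGraph V) (D : Finset V) (u v : V)

lemma expw_comm : expw G u v = expw G v u := by
  rw [expw, expw, dist_comm]

lemma expw_pos : 0 < expw G u v := by
  unfold expw
  positivity

lemma natCast_dist_le_mdist : (G.dist u v : ℕ∞) ≤ mdist G D u v := by
  apply le_sInf
  rintro _ ⟨p, -, rfl⟩
  exact Nat.cast_le.2 (dist_le p)

lemma halfPow_mdist_le_expw : halfPow (mdist G D u v) ≤ expw G u v :=
  (halfPow_antitone (natCast_dist_le_mdist G D u v)).trans_eq (halfPow_natCast _)

lemma wblock_le_wstar : wblock G D u ≤ wstar G D u :=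
  sum_le_sum fun v _ => halfPow_mdist_le_expw G D u v

variable {G D u v}

lemma mdist_eq_top (h : ∀ p : G.Walk u v, p.IsPath → ∃ w ∈ p.support, w ∈ D ∧ w ≠ v) :
    mdist G D u v = ⊤ := by
  refine sInf_eq_top.2 ?_
  rintro _ ⟨p, ⟨hp, -, hpD⟩, rfl⟩
  obtain ⟨w, hwp, hwD, hwv⟩ := h p hp
  exact absurd (hpD w hwp hwD) hwv

lemma wblock_lt_wstar (hv : v ∈ D)
    (h : ∀ p : G.Walk u v, p.IsPath → ∃ w ∈ p.support, w ∈ D ∧ w ≠ v) :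
    wblock G D u < wstar G D u := by
  refine sum_lt_sum (fun w _ => halfPow_mdist_le_expw G D u w) ⟨v, hv, ?_⟩
  simpa [mdist_eq_top h, halfPow] using expw_pos G u v

lemma mdist_self_eq_zero (hu : u ∈ D) : mdist G D u u = 0 :=
  nonpos_iff_eq_zero.1 <| sInf_le ⟨Walk.nil, by simpa using hu, by simp⟩

lemma mdist_le_one_of_adj (huv : G.Adj u v) (hu : u ∉ D) (hv : v ∈ D) : mdist G D u v ≤ 1 := by
  refine sInf_le ⟨huv.toWalk, ⟨by simp [huv.ne], hv, ?_⟩, by simp⟩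
  intro w hw hwD
  rcases (by simpa using hw : w = u ∨ w = v) with rfl | rfl
  · exact absurd hwD hu
  · rfl

lemma two_le_wstar_of_mem (hu : u ∈ D) : 2 ≤ wstar G D u :=
  calc 2 = expw G u u := by simp [expw]
    _ ≤ wstar G D u := single_le_sum (fun w _ => (expw_pos G u w).le) hu

end ModifiedDistance

section ExponentialDomination

variable {G : SimpleGraph V} {D : Finset V} {c : V}

lemma IsExpDomSet.isPorousExpDomSet (hD : IsExpDomSet G D) : IsPorousExpDomSet G D :=
  fun u => (hD u).trans (wblock_le_wstar G D u)

lemma IsExpDomSet.nonempty [Nonempty V] (hD : IsExpDomSet G D) : D.Nonempty := by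
  by_contra! hempty
  have hweight := hD (Classical.arbitrary V)
  norm_num [hempty, wblock] at hweight

lemma IsDomSet.isExpDomSet (hD : IsDomSet G D) : IsExpDomSet G D := by
  intro u
  obtain ⟨v, hv, huv⟩ : ∃ v ∈ D, mdist G D u v ≤ 1 := by
    by_cases hu : u ∈ D
    · exact ⟨u, hu, by simp [mdist_self_eq_zero hu]⟩
    · obtain ⟨v, hv, hadj⟩ := hD u hu
      exact ⟨v, hv, mdist_le_one_of_adj hadj.symm hu hv⟩
  calc 1 = halfPow 1 := by norm_num [halfPow]
    _ ≤ halfPow (mdist G D u v) := halfPow_antitone huv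
    _ ≤ wblock G D u :=
      single_le_sum (f := fun w => halfPow (mdist G D u w)) (fun w _ => halfPow_nonneg _) hv

lemma isDomSet_singleton (hc : G.IsUniversal c) : IsDomSet G {c} :=
  fun _ hv => ⟨c, mem_singleton_self c, hc (Ne.symm (by simpa using hv))⟩

variable [Fintype V]

lemma exists_isExpDomSet_card_eq_gammaE (G : SimpleGraph V) :
    ∃ D : Finset V, IsExpDomSet G D ∧ #D = gammaE G :=
  have huniv : IsDomSet G univ := fun v hv => absurd (mem_univ v) hv
  Nat.sInf_mem (s := {k | ∃ D : Finset V, IsExpDomSet G D ∧ #D = k})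
    ⟨_, univ, huniv.isExpDomSet, rfl⟩

lemma gammaE_eq_one (hc : G.IsUniversal c) : gammaE G = 1 := by
  have : Nonempty V := ⟨c⟩
  obtain ⟨D, hD, hcard⟩ := exists_isExpDomSet_card_eq_gammaE G
  refine le_antisymm (Nat.sInf_le ⟨{c}, (isDomSet_singleton hc).isExpDomSet, card_singleton c⟩) ?_
  rw [← hcard]
  exact hD.nonempty.card_pos

end ExponentialDomination

section Duality

variable [Fintype V] {G : SimpleGraph V} {y : V → ℝ}

lemma sum_mul_sum_expw_mul (hy : ∀ v, ∑ u, expw G u v * y u = 1) (x : V → ℝ) :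
    ∑ v, y v * ∑ u, expw G u v * x u = ∑ u, x u :=
  calc ∑ v, y v * ∑ u, expw G u v * x u
      = ∑ v, ∑ u, expw G v u * y v * x u := by
        refine sum_congr rfl fun v _ => ?_
        rw [mul_sum]
        refine sum_congr rfl fun u _ => ?_
        rw [expw_comm G u v]
        ring
    _ = ∑ u, (∑ v, expw G v u * y v) * x u := by
        rw [sum_comm]
        simp only [sum_mul]
    _ = ∑ u, x u := by simp only [hy, one_mul]

lemma sum_mul_wstar (hy : ∀ v, ∑ u, expw G u v * y u = 1) (D : Finset V) :
    ∑ v, y v * wstar G D v = #D := by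
  classical
  have hindicator := sum_mul_sum_expw_mul hy fun u => if u ∈ D then 1 else 0
  simpa only [mul_ite, mul_one, mul_zero, sum_ite_mem, univ_inter, expw_comm, wstar, sum_const,
    nsmul_eq_mul] using hindicator

lemma gammaEF_eq_sum (hy_nonneg : ∀ u, 0 ≤ y u) (hy : ∀ v, ∑ u, expw G u v * y u = 1) :
    gammaEF G = ∑ u, y u := by
  refine IsLeast.csInf_eq ⟨⟨y, ⟨hy_nonneg, fun v => (hy v).ge⟩, rfl⟩, ?_⟩
  rintro _ ⟨x, ⟨-, hx⟩, rfl⟩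
  rw [← sum_mul_sum_expw_mul hy x]
  exact sum_le_sum fun v _ => le_mul_of_one_le_right (hy_nonneg v) (hx v)

lemma wstar_eq_one_of_card_eq_sum {D : Finset V} (hy_nonneg : ∀ u, 0 ≤ y u)
    (hy : ∀ v, ∑ u, expw G u v * y u = 1) (hD : IsPorousExpDomSet G D)
    (hcard : (#D : ℝ) = ∑ u, y u) {u : V} (hu : 0 < y u) : wstar G D u = 1 := by
  have hsum : ∑ v, y v = ∑ v, y v * wstar G D v := by rw [sum_mul_wstar hy, hcard]
  have htight := (sum_eq_sum_iff_of_le fun v _ =>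
    le_mul_of_one_le_right (hy_nonneg v) (hD v)).1 hsum u (mem_univ u)
  exact (left_eq_mul₀ hu.ne').1 htight

end Duality

section RootedTree

variable {G : SimpleGraph V}

lemma mem_support_of_dist_add_dist_eq (hG : G.IsAcyclic) {u v w : V} (huw : G.Reachable u w)
    (h : G.dist u w + G.dist w v = G.dist u v) {p : G.Walk u v} (hp : p.IsPath) :
    w ∈ p.support := by
  obtain ⟨q, hq⟩ := huw.exists_walk_length_eq_dist
  obtain ⟨r, hr⟩ := (huw.symm.trans p.reachable).exists_walk_length_eq_dist
  have hqr : (q.append r).IsPath :=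
    (q.append r).isPath_of_length_eq_dist (by rw [Walk.length_append, hq, hr, h])
  have hpqr : p = q.append r :=
    congrArg Subtype.val ((hG.subsingleton_path u v).elim ⟨p, hp⟩ ⟨_, hqr⟩)
  rw [hpqr, Walk.mem_support_append_iff]
  exact .inl q.end_mem_support

variable [G.LocallyFinite] {root u w : V}

variable (G) in
/-- The children of `u` in the tree `G` rooted at `root`, encoded as the neighbours of `u` one step
farther away from `root`. -/
noncomputable def childFinset (root u : V) : Finset V :=
  {w ∈ G.neighborFinset u | G.dist root w = G.dist root u + 1}

lemma mem_childFinset :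
    w ∈ childFinset G root u ↔ G.Adj u w ∧ G.dist root w = G.dist root u + 1 := by
  simp [childFinset]

lemma existsUnique_mem_childFinset (hG : G.IsTree) (hw : w ≠ root) :
    ∃! u, w ∈ childFinset G root u := by
  simp only [mem_childFinset]
  obtain ⟨p, hp, hlen⟩ := hG.connected.exists_path_of_dist w root
  have hsnd {u : V} (hadj : G.Adj w u) (hu : G.dist root w = G.dist root u + 1) : u = p.snd := by
    refine hG.isAcyclic.eq_snd_of_adj_start hp hadj
      (mem_support_of_dist_add_dist_eq hG.isAcyclic hadj.reachable ?_ hp)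
    rw [dist_eq_one_iff_adj.2 hadj, dist_comm, @dist_comm _ _ w, hu, add_comm]
  have hadj : G.Adj w p.snd := p.adj_snd (Walk.not_nil_of_ne hw)
  refine ⟨p.snd, ⟨hadj.symm, ?_⟩, fun u hu => hsnd hu.1.symm hu.2⟩
  have htail : G.dist p.snd root ≤ p.tail.length := dist_le p.tail
  have htail_length := Walk.length_tail_add_one (Walk.not_nil_of_ne hw (p := p))
  rcases hG.dist_eq_dist_add_one_of_adj root hadj with h | h
  · exact h
  · rw [dist_comm, @dist_comm _ _ root w] at h
    omega

lemma card_childFinset_root : #(childFinset G root root) = G.degree root := by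
  rw [← card_neighborFinset_eq_degree]
  congr 1
  ext w
  simp [mem_childFinset]

lemma card_childFinset_add_one (hG : G.IsTree) (hu : u ≠ root) :
    #(childFinset G root u) + 1 = G.degree u := by
  classical
  obtain ⟨p, hp, hp_unique⟩ := existsUnique_mem_childFinset hG hu
  have hpu := mem_childFinset.1 hp
  have hchild : childFinset G root u = (G.neighborFinset u).erase p := by
    ext w
    rw [mem_childFinset, mem_erase, mem_neighborFinset]
    constructor
    · rintro ⟨hadj, hw⟩
      exact ⟨by rintro rfl; omega, hadj⟩
    · rintro ⟨hwp, hadj⟩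
      refine ⟨hadj, (hG.dist_eq_dist_add_one_of_adj root hadj).resolve_left fun h => hwp ?_⟩
      exact hp_unique w (mem_childFinset.2 ⟨hadj.symm, h⟩)
  rw [hchild, card_erase_add_one ((mem_neighborFinset ..).2 hpu.1.symm),
    card_neighborFinset_eq_degree]

lemma exists_degree_eq_one_dist_add_dist_eq [Finite V] (hG : G.IsTree) {a v : V} (hav : a ≠ v) :
    ∃ u, G.degree u = 1 ∧ G.dist a v + G.dist v u = G.dist a u := by
  have := Fintype.ofFinite V
  obtain ⟨u, hu, hmax⟩ := exists_max_image {u | G.dist a v + G.dist v u = G.dist a u}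
    (G.dist a) ⟨v, by simp⟩
  simp only [mem_filter, mem_univ, true_and] at hu hmax
  refine ⟨u, ?_, hu⟩
  have hua : u ≠ a := by
    rintro rfl
    have := hG.connected.pos_dist_of_ne hav
    rw [dist_self] at hu
    omega
  have hchild : childFinset G a u = ∅ := by
    refine eq_empty_of_forall_notMem fun w hw => ?_
    obtain ⟨hadj, hw⟩ := mem_childFinset.1 hw
    have hw_beyond : G.dist a v + G.dist v w = G.dist a w := by
      have hupper := hG.connected.dist_triangle (u := v) (v := u) (w := w)
      have hlower := hG.connected.dist_triangle (u := a) (v := v) (w := w)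
      rw [dist_eq_one_iff_adj.2 hadj] at hupper
      omega
    have := hmax w hw_beyond
    omega
  rw [← card_childFinset_add_one hG hua, hchild, card_empty]

variable [Fintype V]

lemma sum_sum_childFinset [DecidableEq V] {M : Type*} [AddCommMonoid M] (hG : G.IsTree) (root : V)
    (f : V → M) : ∑ u, ∑ w ∈ childFinset G root u, f w = ∑ w ∈ univ.erase root, f w := by
  have hroot (u : V) : root ∉ childFinset G root u := by simp [mem_childFinset]
  rw [sum_comm' (t' := univ.erase root) (s' := fun w => {u | w ∈ childFinset G root u})]
  · refine sum_congr rfl fun w hw => ?_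
    have hcard : #{u | w ∈ childFinset G root u} = 1 := by
      simpa [card_eq_one_iff_existsUnique] using
        existsUnique_mem_childFinset hG (ne_of_mem_erase hw)
    rw [sum_const, hcard, one_nsmul]
  · intro u w
    have : w ∈ childFinset G root u → w ≠ root := fun hw => ne_of_mem_of_not_mem hw (hroot u)
    simpa using this

theorem sum_pow_dist_mul_degree {R : Type*} [CommRing R] (hG : G.IsTree) (root : V) (r : R) :
    ∑ u, r ^ G.dist root u * (1 + r - r * G.degree u) = 1 + r := by
  classical
  have hterm (u : V) : r ^ G.dist root u * (1 + r - r * G.degree u) =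
      r ^ G.dist root u - ∑ w ∈ childFinset G root u, r ^ G.dist root w +
        if u = root then r else 0 := by
    have hchild : ∑ w ∈ childFinset G root u, r ^ G.dist root w =
        #(childFinset G root u) * r ^ (G.dist root u + 1) := by
      rw [sum_congr rfl fun w hw => by rw [(mem_childFinset.1 hw).2], sum_const, nsmul_eq_mul]
    rw [hchild]
    split_ifs with hu
    · subst hu
      rw [card_childFinset_root, dist_self]
      ring
    · rw [← card_childFinset_add_one hG hu]
      push_cast
      ring
  rw [sum_congr rfl fun u _ => hterm u, sum_add_distrib, sum_sub_distrib,
    sum_sum_childFinset hG root, ← add_sum_erase univ _ (mem_univ root), dist_self, sum_ite_eq',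
    if_pos (mem_univ root)]
  ring

end RootedTree

section CubicDeficit

variable [Fintype V] {G : SimpleGraph V} [DecidableRel G.Adj]

variable (G) in
/-- The missing degree `3 - deg u` scaled by `1 / 6`: for subcubic trees, an optimal solution of
the linear program defining `gammaEF`. -/
noncomputable def cubicDeficit (u : V) : ℝ := (3 - G.degree u) / 6

lemma cubicDeficit_pos {u : V} (hu : G.degree u < 3) : 0 < cubicDeficit G u := by
  have : (G.degree u : ℝ) < 3 := by exact_mod_cast hu
  unfold cubicDeficit
  linarith

lemma Subcubic.cubicDeficit_nonneg (hsub : Subcubic G) (u : V) : 0 ≤ cubicDeficit G u := by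
  have : (G.degree u : ℝ) ≤ 3 := by exact_mod_cast hsub u
  unfold cubicDeficit
  linarith

lemma sum_expw_mul_cubicDeficit (hG : G.IsTree) (v : V) :
    ∑ u, expw G u v * cubicDeficit G u = 1 :=
  calc ∑ u, expw G u v * cubicDeficit G u
      = (2 / 3) * ∑ u, (1 / 2 : ℝ) ^ G.dist v u * (1 + 1 / 2 - 1 / 2 * G.degree u) := by
        rw [mul_sum]
        refine sum_congr rfl fun u _ => ?_
        rw [expw_comm, expw, cubicDeficit]
        ring
    _ = 1 := by
        rw [sum_pow_dist_mul_degree hG]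
        norm_num

lemma sum_cubicDeficit (hG : G.IsTree) :
    ∑ u, cubicDeficit G u = (Fintype.card V + 2) / 6 := by
  obtain ⟨root⟩ := hG.connected.nonempty
  have hdegree : ∑ u, (1 + 1 - (G.degree u : ℝ)) = 1 + 1 := by
    simpa using sum_pow_dist_mul_degree hG root (1 : ℝ)
  calc ∑ u, cubicDeficit G u = (∑ u, (1 + (1 + 1 - (G.degree u : ℝ)))) / 6 := by
        rw [sum_div]
        refine sum_congr rfl fun u _ => ?_
        rw [cubicDeficit]
        ring
    _ = (Fintype.card V + 2) / 6 := by
        rw [sum_add_distrib, hdegree]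
        norm_num

theorem gammaEF_eq_card_add_two_div_six (hG : G.IsTree) (hsub : Subcubic G) :
    gammaEF G = (Fintype.card V + 2) / 6 := by
  rw [gammaEF_eq_sum hsub.cubicDeficit_nonneg (sum_expw_mul_cubicDeficit hG), sum_cubicDeficit hG]

end CubicDeficit

section Star

variable {G : SimpleGraph V} {c : V}

lemma eq_starGraph_of_isUniversal (hG : G.IsAcyclic) (hc : G.IsUniversal c) : G = starGraph c := by
  have hle : starGraph c ≤ G := by
    intro a b hab
    obtain ⟨hne, rfl | rfl⟩ := starGraph_adj.1 hab
    · exact hc hne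
    · exact (hc hne.symm).symm
  exact (isTree_iff_maximal_isAcyclic.1 (isTree_starGraph c)).2.eq_of_ge hG hle

lemma nonempty_starGraph_iso_completeBipartiteGraph [Fintype V] {n : ℕ} (c : V)
    (hcard : Fintype.card V = n + 1) :
    Nonempty (starGraph c ≃g completeBipartiteGraph (Fin 1) (Fin n)) := by
  classical
  let e : completeBipartiteGraph {v // v = c} {v // ¬v = c} ≃g starGraph c :=
    { toEquiv := Equiv.sumCompl (· = c)
      map_rel_iff' := by
        rintro (⟨a, rfl⟩ | ⟨a, ha⟩) (⟨b, rfl⟩ | ⟨b, hb⟩)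
        · simp
        · simp [Ne.symm hb]
        · simp [ha]
        · simp [ha, hb] }
  have e₁ : {v // v = c} ≃ Fin 1 := Fintype.equivFinOfCardEq (by simp)
  have e₂ : {v // ¬v = c} ≃ Fin n :=
    Fintype.equivFinOfCardEq (by simp [Fintype.card_subtype_compl, hcard])
  exact ⟨e.symm.trans (completeBipartiteGraphCongr e₁ e₂)⟩

lemma isUniversal_of_iso_completeBipartiteGraph {U W : Type*} [Subsingleton U]
    (f : G ≃g completeBipartiteGraph U W) (i : U) : G.IsUniversal (f.symm (.inl i)) := by
  intro v hv
  rw [← f.map_adj_iff, f.apply_symm_apply]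
  rcases hfv : f v with j | j
  · exact absurd (by rw [Subsingleton.elim i j, ← hfv, f.symm_apply_apply]) hv
  · simp

end Star

section Extremal

variable [Fintype V] {G : SimpleGraph V} [DecidableRel G.Adj] {D : Finset V}

lemma wstar_eq_one_of_degree_lt_three (hG : G.IsTree) (hsub : Subcubic G)
    (hD : IsPorousExpDomSet G D) (hcard : (#D : ℝ) = (Fintype.card V + 2) / 6) {u : V}
    (hu : G.degree u < 3) : wstar G D u = 1 :=
  wstar_eq_one_of_card_eq_sum hsub.cubicDeficit_nonneg (sum_expw_mul_cubicDeficit hG) hD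
    (hcard.trans (sum_cubicDeficit hG).symm) (cubicDeficit_pos hu)

lemma degree_eq_three_of_mem (hG : G.IsTree) (hsub : Subcubic G) (hD : IsPorousExpDomSet G D)
    (hcard : (#D : ℝ) = (Fintype.card V + 2) / 6) {v : V} (hv : v ∈ D) : G.degree v = 3 := by
  by_contra hne
  have htight := wstar_eq_one_of_degree_lt_three hG hsub hD hcard (lt_of_le_of_ne (hsub v) hne)
  linarith [two_le_wstar_of_mem (G := G) hv]

lemma IsExpDomSet.card_le_one (hG : G.IsTree) (hsub : Subcubic G) (hD : IsExpDomSet G D)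
    (hcard : (#D : ℝ) = (Fintype.card V + 2) / 6) : #D ≤ 1 := by
  refine Finset.card_le_one.2 fun a ha v hv => ?_
  by_contra hav
  obtain ⟨u, hleaf, hbeyond⟩ := exists_degree_eq_one_dist_add_dist_eq hG hav
  have hblock : wblock G D u < wstar G D u := by
    refine wblock_lt_wstar ha fun p hp => ⟨v, ?_, hv, Ne.symm hav⟩
    refine mem_support_of_dist_add_dist_eq hG.isAcyclic (hG.connected u v) ?_ hp
    simpa only [dist_comm, add_comm] using hbeyond
  have htight := wstar_eq_one_of_degree_lt_three hG hsub hD.isPorousExpDomSet hcard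
    (show G.degree u < 3 by omega)
  exact (hD u).not_gt (hblock.trans_eq htight)

theorem IsExpDomSet.nonempty_iso_completeBipartiteGraph (hG : G.IsTree) (hsub : Subcubic G)
    (hD : IsExpDomSet G D) (hcard : (#D : ℝ) = (Fintype.card V + 2) / 6) :
    Nonempty (G ≃g completeBipartiteGraph (Fin 1) (Fin 3)) := by
  have := hG.connected.nonempty
  obtain ⟨c, hc⟩ := hD.nonempty
  have hcard_D : #D = 1 := (hD.card_le_one hG hsub hcard).antisymm (card_pos.2 ⟨c, hc⟩)
  have hcard_V : Fintype.card V = 4 := by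
    have : (Fintype.card V : ℝ) = 4 := by
      rw [hcard_D] at hcard
      linarith
    exact_mod_cast this
  have huniversal : G.IsUniversal c := by
    rw [← degree_eq_card_sub_one, hcard_V]
    exact degree_eq_three_of_mem hG hsub hD.isPorousExpDomSet hcard hc
  rw [eq_starGraph_of_isUniversal hG.isAcyclic huniversal]
  exact nonempty_starGraph_iso_completeBipartiteGraph c hcard_V

end Extremal

/-- If `T` is a subcubic tree, then `γ_e(T) = γ*_{e,f}(T)` if and only if `T` is `K_{1,3}`. -/
theorem stmt_10 {V : Type*} [Fintype V] (G : SimpleGraph V) [DecidableRel G.Adj]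
    (hT : G.IsTree) (hsub : Subcubic G) :
    (gammaE G : ℝ) = gammaEF G ↔
      Nonempty (G ≃g completeBipartiteGraph (Fin 1) (Fin 3)) := by
  rw [gammaEF_eq_card_add_two_div_six hT hsub]
  constructor
  · intro h
    obtain ⟨D, hD, hcard⟩ := exists_isExpDomSet_card_eq_gammaE G
    exact hD.nonempty_iso_completeBipartiteGraph hT hsub (by rw [hcard, h])
  · rintro ⟨f⟩
    have hcard : Fintype.card V = 4 := by simp [Fintype.card_congr f.toEquiv]
    rw [gammaE_eq_one (isUniversal_of_iso_completeBipartiteGraph f 0), hcard]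
    norm_num
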